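/- Let (A, *, ≻) be a dipterous algebra over a field K and let M_{pq} be the multibrace operations defined recursively from the dipterous structure: with ω^≻(a₁,…,a_k) := ((a₁≻a₂)≻…)≻a_k, set M_{00}=0, M_{10}=M_{01}=id, M_{p0}=0=M_{0q} for p,q ≥ 2, and for p,q ≥ 1, M_{pq}(x₁,…,x_p; y₁,…,y_q) := ω^≻(x₁,…,x_p) * ω^≻(y₁,…,y_q) − Σ_{k=2}^{p+q} Σ ω^≻( M_{i₁j₁}(x¹;y¹), …, M_{i_kj_k}(x^k;y^k) ), the inner sum over sequences (i₁,…,i_k), (j₁,…,j_k) of nonnegative integers with i₁+…+i_k = p, j₁+…+j_k = q and i_t + j_t ≥ 1, with consecutive blocks x^t, y^t. Then for every n ≥ 3 and all x₁,…,x_n, y ∈ A: M_{n1}(x₁,…,x_n; y) = M_{(n−1)1}( (x₁≻x₂), x₃, …, x_n ; y ) − x₁ ≻ M_{(n−1)1}( x₂, …, x_n ; y ). -/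

import Mathlib

open Finset

/-- The set of pairs of sequences `(i₁,…,i_k)`, `(j₁,…,j_k)` of nonnegative integers with
`i₁+⋯+i_k = p`, `j₁+⋯+j_k = q` and `i_t + j_t ≥ 1` for all `t`, encoded as functions
`Fin k → ℕ × ℕ`. -/
def Comps (k p q : ℕ) : Finset (Fin k → ℕ × ℕ) :=
  (Fintype.piFinset fun _ : Fin k => Finset.range (p + 1) ×ˢ Finset.range (q + 1)).filter
    fun c => (∑ t, (c t).1) = p ∧ (∑ t, (c t).2) = q ∧ ∀ t, 1 ≤ (c t).1 + (c t).2

/-- Offset of the `t`-th consecutive block in the first family of variables. -/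
def off1 {k : ℕ} (c : Fin k → ℕ × ℕ) (t : Fin k) : ℕ :=
  ∑ u ∈ Finset.univ.filter (fun u => u < t), (c u).1

/-- Offset of the `t`-th consecutive block in the second family of variables. -/
def off2 {k : ℕ} (c : Fin k → ℕ × ℕ) (t : Fin k) : ℕ :=
  ∑ u ∈ Finset.univ.filter (fun u => u < t), (c u).2

section Ops
variable {A : Type*} [AddCommGroup A]

/-- `M_{i_t j_t}(x^t; y^t)`: the operation `M` applied to the `t`-th consecutive blocks of
the sequences `x` and `y`, as prescribed by the composition `c`. -/
def blockVal (M : ∀ p q : ℕ, (Fin p → A) → (Fin q → A) → A)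
    {k : ℕ} (c : Fin k → ℕ × ℕ) (x y : ℕ → A) (t : Fin k) : A :=
  M (c t).1 (c t).2 (fun s => x (off1 c t + s.1)) (fun s => y (off2 c t + s.1))

/-- The multibrace relation `(R_{ijk})`. -/
def Rrel (M : ∀ p q : ℕ, (Fin p → A) → (Fin q → A) → A)
    (i j k : ℕ) (x y z : ℕ → A) : Prop :=
  ∑ l ∈ Finset.Icc 1 (i + j), ∑ c ∈ Comps l i j,
      M l k (fun t : Fin l => blockVal M c x y t) (fun s : Fin k => z s.1)
    = ∑ m ∈ Finset.Icc 1 (j + k), ∑ c ∈ Comps m j k,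
        M i m (fun s : Fin i => x s.1) (fun t : Fin m => blockVal M c y z t)

/-- `ω^≻`: `omegaIter s x n = ((x₀ ≻ x₁) ≻ ⋯) ≻ x_n`. -/
def omegaIter (s : A → A → A) (x : ℕ → A) : ℕ → A
  | 0 => x 0
  | n + 1 => s (omegaIter s x n) (x (n + 1))

end Ops

theorem mem_Comps {k p q : ℕ} {c : Fin k → ℕ × ℕ} :
    c ∈ Comps k p q ↔
      (∑ t, (c t).1) = p ∧ (∑ t, (c t).2) = q ∧ ∀ t, 1 ≤ (c t).1 + (c t).2 := by
  simp only [Comps, mem_filter, Fintype.mem_piFinset, mem_product, mem_range, Nat.lt_succ_iff,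
    and_iff_right_iff_imp]
  rintro ⟨rfl, rfl, -⟩ t
  exact ⟨single_le_sum (f := fun t => (c t).1) (fun _ _ => Nat.zero_le _) (mem_univ t),
    single_le_sum (f := fun t => (c t).2) (fun _ _ => Nat.zero_le _) (mem_univ t)⟩

theorem Comps_succ_zero_zero (k : ℕ) : Comps (k + 1) 0 0 = ∅ := by
  ext c
  simp only [mem_Comps, sum_eq_zero_iff, mem_univ, true_implies, notMem_empty, iff_false]
  rintro ⟨h₁, h₂, h⟩
  have := h 0
  rw [h₁, h₂] at this
  omega

/-- A composition with `k + 1` blocks is a last block together with a composition of the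
remaining variables with `k` blocks. -/
theorem sum_Comps_succ {A : Type*} [AddCommMonoid A] (k p q : ℕ) (f : (Fin (k + 1) → ℕ × ℕ) → A) :
    ∑ c ∈ Comps (k + 1) p q, f c =
      ∑ a ∈ (range (p + 1) ×ˢ range (q + 1)).filter (fun a => 1 ≤ a.1 + a.2),
        ∑ c ∈ Comps k (p - a.1) (q - a.2), f (Fin.snoc (α := fun _ => ℕ × ℕ) c a) := by
  rw [sum_sigma']
  refine sum_bij' (fun c _ => ⟨c (Fin.last k), fun t => c t.castSucc⟩)
    (fun a _ => Fin.snoc (α := fun _ => ℕ × ℕ) a.2 a.1) ?_ ?_ ?_ ?_ ?_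
  · intro c hc
    rw [mem_Comps, Fin.sum_univ_castSucc, Fin.sum_univ_castSucc] at hc
    obtain ⟨h₁, h₂, h⟩ := hc
    have := h (Fin.last k)
    simp only [mem_sigma, mem_filter, mem_product, mem_range, mem_Comps]
    refine ⟨⟨⟨?_, ?_⟩, this⟩, ?_, ?_, fun t => h _⟩ <;> omega
  · rintro ⟨a, c⟩ hc
    simp only [mem_sigma, mem_filter, mem_product, mem_range, mem_Comps] at hc
    obtain ⟨⟨⟨h₁, h₂⟩, h⟩, h₃, h₄, h₅⟩ := hc
    rw [mem_Comps, Fin.sum_univ_castSucc, Fin.sum_univ_castSucc]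
    simp only [Fin.snoc_castSucc, Fin.snoc_last]
    refine ⟨by omega, by omega, fun t => ?_⟩
    refine Fin.lastCases ?_ (fun t => ?_) t
    · simpa using h
    · simpa using h₅ t
  · intro c _
    exact Fin.snoc_init_self c
  · rintro ⟨a, c⟩ _
    simp
  · intro c _
    exact congrArg f (Fin.snoc_init_self c).symm

theorem off1_castSucc {k : ℕ} (c : Fin (k + 1) → ℕ × ℕ) (t : Fin k) :
    off1 c t.castSucc = off1 (fun u => c u.castSucc) t := by
  simp [off1, sum_filter, Fin.sum_univ_castSucc, not_lt.mpr (Fin.le_last _)]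

theorem off2_castSucc {k : ℕ} (c : Fin (k + 1) → ℕ × ℕ) (t : Fin k) :
    off2 c t.castSucc = off2 (fun u => c u.castSucc) t := by
  simp [off2, sum_filter, Fin.sum_univ_castSucc, not_lt.mpr (Fin.le_last _)]

theorem off1_last {k : ℕ} (c : Fin (k + 1) → ℕ × ℕ) :
    off1 c (Fin.last k) = ∑ t : Fin k, (c t.castSucc).1 := by
  simp [off1, sum_filter, Fin.sum_univ_castSucc]

theorem off2_last {k : ℕ} (c : Fin (k + 1) → ℕ × ℕ) :
    off2 c (Fin.last k) = ∑ t : Fin k, (c t.castSucc).2 := by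
  simp [off2, sum_filter, Fin.sum_univ_castSucc]

theorem omegaIter_congr {A : Type*} [AddCommGroup A] (s : A → A → A) {x x' : ℕ → A} {n : ℕ}
    (h : ∀ t ≤ n, x t = x' t) : omegaIter s x n = omegaIter s x' n := by
  induction n with
  | zero => exact h 0 le_rfl
  | succ n ih =>
    simp only [omegaIter]
    rw [ih fun t ht => h t (ht.trans n.le_succ), h (n + 1) le_rfl]

/-- Merging the first two entries of a sequence shifts the iterated operation by one. -/
theorem omegaIter_merge {A : Type*} [AddCommGroup A] (s : A → A → A) (x : ℕ → A) (n : ℕ) :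
    omegaIter s (fun t => if t = 0 then s (x 0) (x 1) else x (t + 1)) n =
      omegaIter s x (n + 1) := by
  induction n with
  | zero => simp [omegaIter]
  | succ n ih => rw [omegaIter, ih]; simp [omegaIter]

section BlockSum
variable {K A : Type*} [Field K] [AddCommGroup A] [Module K A]

/-- The part with exactly `k` blocks of the expansion of `ω^≻(x) * ω^≻(y)`. -/
def blockSum (succ : A →ₗ[K] A →ₗ[K] A) (M : ∀ p q : ℕ, (Fin p → A) → (Fin q → A) → A)
    (x y : ℕ → A) (k p q : ℕ) : A :=
  ∑ c ∈ Comps k p q, omegaIter (fun a b => succ a b)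
    (fun t => if h : t < k then blockVal M c x y ⟨t, h⟩ else 0) (k - 1)

variable (succ : A →ₗ[K] A →ₗ[K] A) (M : ∀ p q : ℕ, (Fin p → A) → (Fin q → A) → A)
  (x y : ℕ → A)

theorem blockSum_one (p q : ℕ) (h : 1 ≤ p + q) :
    blockSum succ M x y 1 p q = M p q (fun i => x i) (fun i => y i) := by
  have hC : Comps 1 p q = {fun _ => (p, q)} := by
    ext c
    simp only [mem_Comps, univ_unique, sum_singleton, mem_singleton, Fin.default_eq_zero,
      funext_iff, Fin.forall_fin_one, Prod.ext_iff]
    omega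
  simp [blockSum, hC, omegaIter, blockVal, off1, off2]

theorem blockSum_succ_succ (k p q : ℕ) :
    blockSum succ M x y (k + 2) p q =
      ∑ a ∈ (range (p + 1) ×ˢ range (q + 1)).filter (fun a => 1 ≤ a.1 + a.2),
        succ (blockSum succ M x y (k + 1) (p - a.1) (q - a.2))
          (M a.1 a.2 (fun i => x (p - a.1 + i)) (fun i => y (q - a.2 + i))) := by
  rw [blockSum, sum_Comps_succ]
  refine sum_congr rfl fun a _ => ?_
  rw [blockSum, map_sum, LinearMap.sum_apply]
  refine sum_congr rfl fun c hc => ?_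
  obtain ⟨h₁, h₂, -⟩ := mem_Comps.mp hc
  simp only [Nat.add_sub_cancel, show k + 2 - 1 = k + 1 from rfl, omegaIter]
  congr 1
  · congr 1
    refine omegaIter_congr _ fun t ht => ?_
    have ht' : t < k + 1 := by omega
    rw [dif_pos (by omega), dif_pos ht']
    have := off1_castSucc (Fin.snoc (α := fun _ => ℕ × ℕ) c a) ⟨t, ht'⟩
    have h2 := off2_castSucc (Fin.snoc (α := fun _ => ℕ × ℕ) c a) ⟨t, ht'⟩
    simp only [Fin.snoc_castSucc] at this h2
    change blockVal M _ x y (Fin.castSucc ⟨t, ht'⟩) = _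
    simp only [blockVal, this, h2]
    rw [Fin.snoc_castSucc]
  · rw [dif_pos (by omega)]
    have := off1_last (Fin.snoc (α := fun _ => ℕ × ℕ) c a)
    have h2 := off2_last (Fin.snoc (α := fun _ => ℕ × ℕ) c a)
    simp only [Fin.snoc_castSucc, h₁, h₂] at this h2
    change blockVal M _ x y (Fin.last (k + 1)) = _
    simp only [blockVal, this, h2]
    rw [Fin.snoc_last]

theorem blockSum_succ_zero_zero (k : ℕ) : blockSum succ M x y (k + 1) 0 0 = 0 := by
  rw [blockSum, Comps_succ_zero_zero, sum_empty]

/-- Without variables of the second family, only the composition into singletons contributes. -/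
theorem blockSum_succ_right_zero (hM10 : ∀ x y, M 1 0 x y = x 0)
    (hMp0 : ∀ p, 2 ≤ p → ∀ x y, M p 0 x y = 0) (k p : ℕ) :
    blockSum succ M x y (k + 1) p 0 =
      if k + 1 = p then omegaIter (fun a b => succ a b) x k else 0 := by
  induction k generalizing p with
  | zero =>
    obtain _ | _ | p := p
    · simp [blockSum_succ_zero_zero]
    · simp [blockSum_one, hM10, omegaIter]
    · simp [blockSum_one, hMp0]
  | succ k ih =>
    obtain _ | p := p
    · simp [blockSum_succ_zero_zero]
    · rw [blockSum_succ_succ, sum_eq_single (1, 0)]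
      · simp only [Nat.add_sub_cancel, ih, hM10, omegaIter]
        by_cases h : k + 1 = p
        · subst h
          simp
        · simp [h]
      · rintro ⟨i, j⟩ ha hne
        simp only [mem_filter, mem_product, mem_range] at ha
        obtain rfl : j = 0 := by omega
        have : i ≠ 1 := fun h => hne (by rw [h])
        rw [hMp0 i (by omega), map_zero]
      · simp

/-- Recursion for the block sums with a single variable in the second family, according to
whether the last block is a singleton of the first family or contains that variable. -/
theorem blockSum_succ_succ_one (hM10 : ∀ x y, M 1 0 x y = x 0)
    (hMp0 : ∀ p, 2 ≤ p → ∀ x y, M p 0 x y = 0) (k p : ℕ) (hk : k ≤ p) :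
    blockSum succ M x y (k + 2) (p + 1) 1 =
      succ (blockSum succ M x y (k + 1) p 1) (x p) +
        succ (omegaIter (fun a b => succ a b) x k)
          (M (p - k) 1 (fun i => x (k + 1 + i)) (fun i => y i)) := by
  rw [blockSum_succ_succ, sum_filter, sum_product]
  simp only [sum_range_succ _ 1, sum_range_one, sum_add_distrib]
  congr 1
  · rw [sum_eq_single 1]
    · simp [hM10]
    · intro i _ hi
      split_ifs with h
      · rw [hMp0 i (by omega), map_zero]
      · rfl
    · simp
  · rw [sum_eq_single (p - k)]
    · have h : p + 1 - (p - k) = k + 1 := by omega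
      simp [h, blockSum_succ_right_zero succ M x y hM10 hMp0]
    · intro i hi hne
      rw [mem_range] at hi
      rw [if_pos (by simp), blockSum_succ_right_zero succ M x y hM10 hMp0,
        if_neg (by omega), map_zero, LinearMap.zero_apply]
    · exact fun h => absurd (mem_range.mpr (by omega)) h

end BlockSum

section Dipterous
variable {K A : Type*} [Field K] [AddCommGroup A] [Module K A]

/-- Closed recursion for `M_{p1}` in terms of lower `M_{i1}`, for `p ≥ 2`. -/
theorem multibrace_one_eq (star succ : A →ₗ[K] A →ₗ[K] A)
    (hdipt : ∀ x y z : A, succ (star x y) z = succ x (succ y z))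
    (M : ∀ p q : ℕ, (Fin p → A) → (Fin q → A) → A)
    (hM10 : ∀ x y, M 1 0 x y = x 0)
    (hMp0 : ∀ p, 2 ≤ p → ∀ x y, M p 0 x y = 0)
    (hMrec : ∀ p q : ℕ, 1 ≤ p → 1 ≤ q → ∀ x y : ℕ → A,
      M p q (fun i : Fin p => x i.1) (fun i : Fin q => y i.1)
        = star (omegaIter (fun a b => succ a b) x (p - 1))
            (omegaIter (fun a b => succ a b) y (q - 1))
          - ∑ k ∈ Finset.Icc 2 (p + q), blockSum succ M x y k p q)
    (p : ℕ) (x : ℕ → A) (y : A) :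
    M (p + 2) 1 (fun i => x i) (fun _ => y) =
      star (omegaIter (fun a b => succ a b) x (p + 1)) y
        - succ (omegaIter (fun a b => succ a b) x p) (succ y (x (p + 1)))
        - ∑ k ∈ range (p + 2), succ (omegaIter (fun a b => succ a b) x k)
            (M (p + 1 - k) 1 (fun i => x (k + 1 + i)) (fun _ => y)) := by
  have hIcc (n : ℕ) (f : ℕ → A) : ∑ k ∈ Icc 2 (n + 1), f k = ∑ k ∈ range n, f (k + 2) := by
    rw [← Ico_add_one_right_eq_Icc, sum_Ico_eq_sum_range]
    exact sum_congr rfl fun k _ => by rw [add_comm]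
  have hexpand : star (omegaIter (fun a b => succ a b) x p) y =
      ∑ k ∈ range (p + 2), blockSum succ M x (fun _ => y) (k + 1) (p + 1) 1 := by
    have h := hMrec (p + 1) 1 (by omega) le_rfl x (fun _ => y)
    rw [hIcc, eq_sub_iff_add_eq] at h
    rw [sum_range_succ', zero_add, blockSum_one _ _ _ _ _ _ (by omega), add_comm]
    exact h.symm
  have h := hMrec (p + 2) 1 (by omega) le_rfl x (fun _ => y)
  rw [hIcc, sum_congr rfl fun k hk => blockSum_succ_succ_one succ M x (fun _ => y) hM10 hMp0 k
    (p + 1) (by rw [mem_range] at hk; omega), sum_add_distrib, ← LinearMap.sum_apply, ← map_sum,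
    ← hexpand, hdipt, ← sub_sub] at h
  exact h

end Dipterous

/-- For the multibrace operations `M_{pq}` induced on a dipterous algebra,
`M_{n1}(x₁,…,x_n; y) = M_{(n-1)1}((x₁≻x₂), x₃,…,x_n; y) − x₁ ≻ M_{(n-1)1}(x₂,…,x_n; y)`
for every `n ≥ 3`. -/
theorem dipterous_Mn1_identity (K A : Type*) [Field K] [AddCommGroup A] [Module K A]
    (star succ : A →ₗ[K] A →ₗ[K] A)
    (hstar : ∀ x y z : A, star (star x y) z = star x (star y z))
    (hdipt : ∀ x y z : A, succ (star x y) z = succ x (succ y z))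
    (M : ∀ p q : ℕ, (Fin p → A) → (Fin q → A) → A)
    (hM00 : ∀ x y, M 0 0 x y = 0)
    (hM10 : ∀ x y, M 1 0 x y = x 0)
    (hM01 : ∀ x y, M 0 1 x y = y 0)
    (hMp0 : ∀ p, 2 ≤ p → ∀ x y, M p 0 x y = 0)
    (hM0q : ∀ q, 2 ≤ q → ∀ x y, M 0 q x y = 0)
    (hMrec : ∀ p q : ℕ, 1 ≤ p → 1 ≤ q → ∀ x y : ℕ → A,
      M p q (fun i : Fin p => x i.1) (fun i : Fin q => y i.1)
        = star (omegaIter (fun a b => succ a b) x (p - 1))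
            (omegaIter (fun a b => succ a b) y (q - 1))
          - ∑ k ∈ Finset.Icc 2 (p + q), ∑ c ∈ Comps k p q,
              omegaIter (fun a b => succ a b)
                (fun t => if h : t < k then blockVal M c x y ⟨t, h⟩ else 0) (k - 1)) :
    ∀ n : ℕ, 3 ≤ n → ∀ (x : ℕ → A) (y : A),
      M n 1 (fun i : Fin n => x i.1) (fun _ : Fin 1 => y)
        = M (n - 1) 1
            (fun i : Fin (n - 1) => if i.1 = 0 then succ (x 0) (x 1) else x (i.1 + 1))
            (fun _ : Fin 1 => y)
          - succ (x 0)
              (M (n - 1) 1 (fun i : Fin (n - 1) => x (i.1 + 1)) (fun _ : Fin 1 => y)) := by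
  intro n hn x y
  obtain ⟨p, rfl⟩ : ∃ p, n = p + 3 := ⟨n - 3, by omega⟩
  have key := multibrace_one_eq star succ hdipt M hM10 hMp0 hMrec
  rw [key (p + 1) x y, sum_range_succ']
  have hmerge := key p (fun t => if t = 0 then succ (x 0) (x 1) else x (t + 1)) y
  simp only [omegaIter_merge (fun a b => succ a b) x] at hmerge
  change _ = M (p + 2) 1
      (fun i : Fin (p + 2) => if i.1 = 0 then succ (x 0) (x 1) else x (i.1 + 1)) (fun _ => y) -
    succ (x 0) (M (p + 2) 1 (fun i : Fin (p + 2) => x (i.1 + 1)) (fun _ => y))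
  rw [hmerge]
  have hsum : ∀ k ∈ range (p + 2),
      succ (omegaIter (fun a b => succ a b) x (k + 1)) (M (p + 1 + 1 - (k + 1)) 1
        (fun i => x (k + 1 + 1 + i)) (fun _ => y)) =
      succ (omegaIter (fun a b => succ a b) x (k + 1)) (M (p + 1 - k) 1
        (fun i => if k + 1 + i.1 = 0 then succ (x 0) (x 1) else x (k + 1 + i + 1))
        (fun _ => y)) := by
    intro k _
    rw [Nat.add_sub_add_right]
    congr 2
    funext i
    rw [if_neg (by omega), add_right_comm]
  rw [sum_congr rfl hsum, ← sub_sub]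
  simp only [omegaIter, zero_add, Nat.sub_zero, Nat.add_eq_zero_iff, one_ne_zero, and_false,
    if_false, add_comm 1]
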